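/- arXiv:2405.01894 — 2 statements merged into one kernel-verified Lean document; each statement's English description precedes it below -/
import Mathlib

section
/- Assume condition (Cond1). Let u_τ ∈ V be such that u_τ ≥ 0, u_τ(x₀) = 0 for some x₀ ∈ (0,1), but u_τ ≢ 0. Then there cannot exist a non-negative strong solution backwards in time, i.e. there is no t₀ < τ and no non-negative strong solution u to problem (Incl) on [t₀,∞) with u(τ) = u_τ. -/
open MeasureTheory Set

noncomputable section

/-- Lebesgue measure restricted to the spatial interval `(0,1)`. -/
def μ01 : Measure ℝ := volume.restrict (Ioo (0:ℝ) 1)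

/-- `H = L²(0,1)`. -/
abbrev Hsp : Type := Lp ℝ 2 μ01

/-- The Heaviside multifunction. -/
def heaviside (s : ℝ) : Set ℝ :=
  if s < 0 then {-1} else if s = 0 then Icc (-1) 1 else {1}

/-- Condition (Cond1). -/
structure Cond1 (b ω : ℝ → ℝ) (b0 b1 ω0 ω1 : ℝ) : Prop where
  contb : Continuous b
  contω : Continuous ω
  b0pos : 0 < b0
  blb : ∀ t, b0 ≤ b t
  bub : ∀ t, b t ≤ b1
  ω0nonneg : 0 ≤ ω0
  ωlb : ∀ t, ω0 ≤ ω t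
  ωub : ∀ t, ω t ≤ ω1

/-- `v ∈ H²(0,1) ∩ H¹₀(0,1)` with (weak) second derivative `w ∈ L²(0,1)`:
`v` has a representative that is continuous on `[0,1]`, vanishes at the boundary,
is differentiable on `(0,1)` and whose derivative is an antiderivative of `w`. -/
def InDomainA (v w : Hsp) : Prop :=
  ∃ vt : ℝ → ℝ, ContinuousOn vt (Icc 0 1) ∧ vt 0 = 0 ∧ vt 1 = 0 ∧
    (∀ᵐ x ∂μ01, vt x = v x) ∧
    ∃ g : ℝ → ℝ,
      (∀ x ∈ Ioo (0:ℝ) 1, HasDerivAt vt (g x) x) ∧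
      ∀ x ∈ Ioo (0:ℝ) 1, ∀ y ∈ Ioo (0:ℝ) 1, g x - g y = ∫ z in y..x, w z

/-- A strong solution of the inclusion on `[τ,∞)`, with explicit data:
`r` is the `L²`-selection, `u'` the time derivative, `uxx` the second spatial derivative. -/
structure IsStrongSolutionWith (b ω : ℝ → ℝ) (τ : ℝ) (u r u' uxx : ℝ → Hsp) : Prop where
  cont : ContinuousOn u (Ici τ)
  rmem : ∀ T, τ < T → MemLp r 2 (volume.restrict (Ioo τ T))
  sel : ∀ᵐ t ∂(volume.restrict (Ioi τ)), ∀ᵐ x ∂μ01,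
      ∃ h ∈ heaviside (u t x), r t x = b t * h + ω t * u t x
  dom : ∀ᵐ t ∂(volume.restrict (Ioi τ)), InDomainA (u t) (uxx t)
  eq : ∀ᵐ t ∂(volume.restrict (Ioi τ)), u' t = r t + uxx t
  fund : ∀ T1 T2 : ℝ, τ < T1 → T1 < T2 →
      IntervalIntegrable u' volume T1 T2 ∧
      ∀ t ∈ Icc T1 T2, u t = u T1 + ∫ s in T1..t, u' s

/-- A strong solution of the inclusion on `[τ,∞)`. -/
def IsStrongSolution (b ω : ℝ → ℝ) (τ : ℝ) (u : ℝ → Hsp) : Prop :=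
  ∃ r u' uxx, IsStrongSolutionWith b ω τ u r u' uxx

/-- The solution is non-negative on `[τ,∞)`. -/
def NonnegOn (u : ℝ → Hsp) (τ : ℝ) : Prop :=
  ∀ t, τ ≤ t → ∀ᵐ x ∂μ01, 0 ≤ u t x

/-- `v` is positive: it has a continuous representative on `[0,1]`
which is strictly positive on `(0,1)`. -/
def IsPositive (v : Hsp) : Prop :=
  ∃ vt : ℝ → ℝ, ContinuousOn vt (Icc 0 1) ∧ (∀ᵐ x ∂μ01, vt x = v x) ∧
    ∀ x ∈ Ioo (0:ℝ) 1, 0 < vt x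


/-- `vt` is a representative of `v` witnessing `v ∈ V = H¹₀(0,1)`:
continuous on `[0,1]`, vanishing at the boundary, with a square-integrable
weak derivative `g`. -/
def InVRep (v : Hsp) (vt : ℝ → ℝ) : Prop :=
  ContinuousOn vt (Icc 0 1) ∧ vt 0 = 0 ∧ vt 1 = 0 ∧ (∀ᵐ x ∂μ01, vt x = v x) ∧
  ∃ g : ℝ → ℝ, MemLp g 2 μ01 ∧
    ∀ x ∈ Icc (0:ℝ) 1, ∀ y ∈ Icc (0:ℝ) 1, vt x - vt y = ∫ z in y..x, g z

/-!
A nonnegative solution of the inclusion is a supersolution of the heat equation, `uₓₓ ≤ u'`: where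
`u > 0` the right-hand side is `b + ω u ≥ 0`, and on the set where `u(t)` vanishes, almost every
point has `uₓₓ = 0`, while `u' ≥ 0` because `u(t)` is a minimum in time there. The argument is then
a strong minimum principle. Let `G(σ, y)` be the heat kernel. On a small interval around `x₀` the
backward kernel `G(τ - t, x - x₀) - G(τ - t, L)` is nonnegative, vanishes at the endpoints `x₀ ± L`,
and is a subsolution of the backward heat equation as long as `τ - t ≤ L² / 2`. Hence its inner
product with `u(t)` is nondecreasing in `t`, and its limit as `t → τ` is at most `u(τ, x₀) = 0`. So
`u(t)` vanishes near `x₀` for `t` slightly below `τ`, and in the limit so does `u(τ)`: its zero set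
in `(0, 1)` is open. Being closed and nonempty, it is all of `(0, 1)`.
-/

open Filter Topology

section AbsoluteContinuity

theorem absolutelyContinuousOnInterval_of_dist_le_add {X Y Z : Type*} [PseudoMetricSpace X]
    [PseudoMetricSpace Y] [PseudoMetricSpace Z] {f : ℝ → X} {g : ℝ → Y} {h : ℝ → Z} {a b : ℝ}
    (hg : AbsolutelyContinuousOnInterval g a b) (hh : AbsolutelyContinuousOnInterval h a b)
    (hle : ∀ x ∈ uIcc a b, ∀ y ∈ uIcc a b,
      dist (f x) (f y) ≤ dist (g x) (g y) + dist (h x) (h y)) :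
    AbsolutelyContinuousOnInterval f a b := by
  unfold AbsolutelyContinuousOnInterval at *
  refine squeeze_zero' (.of_forall fun _ ↦ Finset.sum_nonneg fun _ _ ↦ dist_nonneg) ?_
    (by simpa using hg.add hh)
  rw [eventually_inf_principal]
  refine .of_forall fun I hI ↦ ?_
  rw [← Finset.sum_add_distrib]
  exact Finset.sum_le_sum fun i hi ↦ hle _ (hI.1 i hi).1 _ (hI.1 i hi).2

theorem absolutelyContinuousOnInterval_inner {E : Type*} [NormedAddCommGroup E]
    [InnerProductSpace ℝ E] {f g : ℝ → E} {a b : ℝ} (hf : AbsolutelyContinuousOnInterval f a b)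
    (hg : AbsolutelyContinuousOnInterval g a b) :
    AbsolutelyContinuousOnInterval (fun t ↦ inner ℝ (f t) (g t)) a b := by
  obtain ⟨C, hC⟩ := hf.exists_bound
  obtain ⟨D, hD⟩ := hg.exists_bound
  refine absolutelyContinuousOnInterval_of_dist_le_add (hf.const_smul D) (hg.const_smul C)
    fun x hx y hy ↦ ?_
  have hsplit : inner ℝ (f x) (g x) - inner ℝ (f y) (g y) =
      inner ℝ (f x - f y) (g x) + inner ℝ (f y) (g x - g y) := by
    rw [inner_sub_left, inner_sub_right]; ring
  calc dist (inner ℝ (f x) (g x)) (inner ℝ (f y) (g y))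
      ≤ ‖f x - f y‖ * ‖g x‖ + ‖f y‖ * ‖g x - g y‖ := by
        rw [Real.dist_eq, hsplit]
        exact (abs_add_le _ _).trans
          (add_le_add (abs_real_inner_le_norm _ _) (abs_real_inner_le_norm _ _))
    _ ≤ |D| * ‖f x - f y‖ + |C| * ‖g x - g y‖ := by
        rw [mul_comm]
        gcongr
        · exact (hD x hx).trans (le_abs_self D)
        · exact (hC y hy).trans (le_abs_self C)
    _ = dist ((D • f) x) ((D • f) y) + dist ((C • g) x) ((C • g) y) := by
        simp only [Pi.smul_apply, dist_eq_norm, ← smul_sub, norm_smul, Real.norm_eq_abs]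

theorem absolutelyContinuousOnInterval_of_eq_add_integral {E : Type*} [NormedAddCommGroup E]
    [NormedSpace ℝ E] {f f' : ℝ → E} {a b : ℝ} (hint : IntervalIntegrable f' volume a b)
    (hf : ∀ x ∈ uIcc a b, f x = f a + ∫ z in a..x, f' z) :
    AbsolutelyContinuousOnInterval f a b := by
  have hnorm := hint.norm.absolutelyContinuousOnInterval_intervalIntegral left_mem_uIcc
  refine absolutelyContinuousOnInterval_of_dist_le_add hnorm hnorm fun x hx y hy ↦
    le_trans ?_ (le_add_of_nonneg_right dist_nonneg)
  have hax := hint.mono_set (uIcc_subset_uIcc_left hx)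
  have hay := hint.mono_set (uIcc_subset_uIcc_left hy)
  rw [hf x hx, hf y hy, dist_add_left, dist_eq_norm, Real.dist_eq,
    intervalIntegral.integral_interval_sub_left hax hay,
    intervalIntegral.integral_interval_sub_left hax.norm hay.norm]
  exact intervalIntegral.norm_integral_le_abs_integral_norm

theorem absolutelyContinuousOnInterval_of_hasDerivAt {E : Type*} [NormedAddCommGroup E]
    [NormedSpace ℝ E] {f f' : ℝ → E} {a b : ℝ} (hf : ∀ x ∈ uIcc a b, HasDerivAt f (f' x) x)
    (hf' : ContinuousOn f' (uIcc a b)) : AbsolutelyContinuousOnInterval f a b := by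
  obtain ⟨C, hC⟩ := isCompact_uIcc.exists_bound_of_continuousOn hf'
  refine ((convex_uIcc a b).lipschitzOnWith_of_nnnorm_hasDerivWithin_le (C := C.toNNReal)
    (fun x hx ↦ (hf x hx).hasDerivWithinAt) fun x hx ↦ ?_).absolutelyContinuousOnInterval
  exact NNReal.le_toNNReal_of_coe_le (hC x hx)

theorem le_of_absolutelyContinuousOnInterval_of_deriv_nonneg {f : ℝ → ℝ} {a b : ℝ} (hab : a ≤ b)
    (hf : AbsolutelyContinuousOnInterval f a b)
    (hderiv : ∀ᵐ t ∂volume.restrict (Ioo a b), 0 ≤ deriv f t) : f a ≤ f b := by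
  have hint : 0 ≤ ∫ t in a..b, deriv f t := by
    apply intervalIntegral.integral_nonneg_of_ae_restrict hab
    rwa [← restrict_Ioo_eq_restrict_Icc]
  linarith [hf.integral_deriv_eq_sub]

theorem ae_hasDerivAt_of_eq_add_integral {E : Type*} [NormedAddCommGroup E] [NormedSpace ℝ E]
    [CompleteSpace E] {f f' : ℝ → E} {a b c : ℝ} (hc : c ∈ Icc a b)
    (hint : IntervalIntegrable f' volume a b)
    (hf : ∀ x ∈ Ioo a b, f x = f c + ∫ z in c..x, f' z) :
    ∀ᵐ x ∂volume.restrict (Ioo a b), HasDerivAt f (f' x) x := by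
  have hIcc : uIcc a b = Icc a b := uIcc_of_le (hc.1.trans hc.2)
  rw [ae_restrict_iff' measurableSet_Ioo]
  filter_upwards [hint.ae_hasDerivAt_integral] with x hderiv hx
  have hderiv := hderiv (hIcc ▸ Ioo_subset_Icc_self hx) c (hIcc ▸ hc)
  refine (hderiv.const_add (f c)).congr_of_eventuallyEq ?_
  filter_upwards [isOpen_Ioo.mem_nhds hx] with y hy using hf y hy

/-- Only countably many points of a level set are isolated from the right within it; at every
other point the derivative, if it exists, is computed along the level set. -/
theorem ae_deriv_eq_zero_of_eq {F : Type*} [NormedAddCommGroup F] [NormedSpace ℝ F]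
    (f : ℝ → F) (c : F) : ∀ᵐ x, f x = c → deriv f x = 0 := by
  set S : Set ℝ := f ⁻¹' {c}
  have hisolated : {x ∈ S | 𝓝[S ∩ Ioi x] x = ⊥}.Countable :=
    countable_setOfPred_isolated_right_within
  filter_upwards [hisolated.ae_notMem volume] with x hx hxc
  by_cases hdiff : DifferentiableAt ℝ f x
  · have hne : (𝓝[S ∩ Ioi x] x).NeBot := ⟨fun h ↦ hx ⟨hxc, h⟩⟩
    have hunique : UniqueDiffWithinAt ℝ S x := by
      rw [uniqueDiffWithinAt_iff_accPt, accPt_principal_iff_nhdsWithin]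
      exact hne.mono (nhdsWithin_mono _ fun y hy ↦ ⟨hy.1, hy.2.ne'⟩)
    have hconst : HasDerivWithinAt f 0 S x :=
      (hasDerivWithinAt_const x S c).congr (fun y hy ↦ hy) hxc
    exact hunique.eq_deriv _ hdiff.hasDerivAt.hasDerivWithinAt hconst
  · exact deriv_zero_of_not_differentiableAt hdiff

/-- Green's second identity: the integrand is the derivative of the Wronskian. -/
theorem integral_deriv_mul_sub_mul_deriv_eq {f f' φ φ' : ℝ → ℝ} {p q : ℝ}
    (hf : ∀ x ∈ uIcc p q, HasDerivAt f (f' x) x) (hφ : ∀ x ∈ uIcc p q, HasDerivAt φ (φ' x) x)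
    (hf' : AbsolutelyContinuousOnInterval f' p q) (hφ' : AbsolutelyContinuousOnInterval φ' p q) :
    ∫ x in p..q, (deriv f' x * φ x - f x * deriv φ' x) =
      (f' q * φ q - f q * φ' q) - (f' p * φ p - f p * φ' p) := by
  have hfac := absolutelyContinuousOnInterval_of_hasDerivAt hf hf'.continuousOn
  have hφac := absolutelyContinuousOnInterval_of_hasDerivAt hφ hφ'.continuousOn
  rw [← ((hf'.fun_mul hφac).fun_sub (hfac.fun_mul hφ')).integral_deriv_eq_sub]
  apply intervalIntegral.integral_congr_ae
  filter_upwards [hf'.ae_differentiableAt, hφ'.ae_differentiableAt] with x hdf' hdφ' hx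
  have hx := uIoc_subset_uIcc hx
  rw [(((hdf' hx).hasDerivAt.fun_mul (hφ x hx)).fun_sub
    ((hf x hx).fun_mul (hdφ' hx).hasDerivAt)).deriv]
  ring

theorem integral_deriv_mul_sub_mul_deriv_nonneg {f f' φ φ' : ℝ → ℝ} {p q : ℝ}
    (hf : ∀ x ∈ uIcc p q, HasDerivAt f (f' x) x) (hφ : ∀ x ∈ uIcc p q, HasDerivAt φ (φ' x) x)
    (hf' : AbsolutelyContinuousOnInterval f' p q) (hφ' : AbsolutelyContinuousOnInterval φ' p q)
    (hfp : 0 ≤ f p) (hfq : 0 ≤ f q) (hφp : φ p = 0) (hφq : φ q = 0) (hφp' : 0 ≤ φ' p)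
    (hφq' : φ' q ≤ 0) : 0 ≤ ∫ x in p..q, (deriv f' x * φ x - f x * deriv φ' x) := by
  rw [integral_deriv_mul_sub_mul_deriv_eq hf hφ hf' hφ', hφp, hφq]
  linarith [mul_nonneg hfp hφp', mul_nonpos_of_nonneg_of_nonpos hfq hφq']

end AbsoluteContinuity

section Lp

theorem nonneg_of_ae_nonneg_of_continuousOn_Ioo {f : ℝ → ℝ} {a b : ℝ}
    (hf : ContinuousOn f (Ioo a b)) (hnonneg : ∀ᵐ x ∂volume.restrict (Ioo a b), 0 ≤ f x) :
    ∀ x ∈ Ioo a b, 0 ≤ f x := by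
  have habs : f =ᵐ[volume.restrict (Ioo a b)] fun x ↦ |f x| := by
    filter_upwards [hnonneg] with x hx using (abs_of_nonneg hx).symm
  intro x hx
  rw [Measure.eqOn_Ioo_of_ae_eq volume habs hf hf.abs hx]
  exact abs_nonneg _

theorem ae_mem_of_tendsto_Lp {α ι E : Type*} {m : MeasurableSpace α} [NormedAddCommGroup E]
    {μ : Measure α} {p : ENNReal} [Fact (1 ≤ p)] {l : Filter ι} [l.NeBot] [l.IsCountablyGenerated]
    {v : ι → Lp E p μ} {v₀ : Lp E p μ} {S : Set α} {C : Set E} (hC : IsClosed C)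
    (hv : Tendsto v l (𝓝 v₀)) (hmem : ∀ᶠ i in l, ∀ᵐ x ∂μ, x ∈ S → v i x ∈ C) :
    ∀ᵐ x ∂μ, x ∈ S → v₀ x ∈ C := by
  obtain ⟨i, hi, hlim⟩ := (tendstoInMeasure_of_tendsto_Lp hv).exists_seq_tendsto_ae'
  obtain ⟨N, hN⟩ := eventually_atTop.1 (hi.eventually hmem)
  filter_upwards [hlim, ae_all_iff.2 fun n ↦ ae_all_iff.2 fun hn : N ≤ n ↦ hN n hn]
    with x hx hxC hxS
  exact hC.mem_of_tendsto hx (eventually_atTop.2 ⟨N, fun n hn ↦ hxC n hn hxS⟩)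

theorem ae_eq_zero_imp_deriv_nonneg_of_hasDerivWithinAt {α : Type*} {m : MeasurableSpace α}
    {μ : Measure α} {p : ENNReal} [Fact (1 ≤ p)] {u : ℝ → Lp ℝ p μ} {u' : Lp ℝ p μ} {t : ℝ}
    (hu : HasDerivWithinAt u u' (Ioi t) t) (hnonneg : ∀ᶠ s in 𝓝[>] t, ∀ᵐ x ∂μ, 0 ≤ u s x) :
    ∀ᵐ x ∂μ, u t x = 0 → 0 ≤ u' x := by
  refine ae_mem_of_tendsto_Lp (S := {x | u t x = 0}) (C := Ici 0) isClosed_Ici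
    ((hasDerivWithinAt_iff_tendsto_slope' self_notMem_Ioi).1 hu) ?_
  filter_upwards [hnonneg, self_mem_nhdsWithin] with s hs hts
  filter_upwards [hs, Lp.coeFn_smul (s - t)⁻¹ (u s - u t), Lp.coeFn_sub (u s) (u t)]
    with x hx hsmul hsub hzero
  rw [slope_def_module, mem_Ici, hsmul, Pi.smul_apply, hsub, Pi.sub_apply, hzero, sub_zero]
  exact mul_nonneg (inv_nonneg.2 (sub_pos.2 hts).le) hx

end Lp

section CutoffLp

variable {X : Type*} [TopologicalSpace X] [T2Space X] [MeasurableSpace X] [BorelSpace X] {K : Set X}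

theorem memLp_indicator_continuousMap (hK : IsCompact K) (μ : Measure X) [IsFiniteMeasure μ]
    (f : C(X, ℝ)) : MemLp (K.indicator f) 2 μ := by
  obtain ⟨C, hC⟩ := hK.exists_bound_of_continuousOn f.continuous.continuousOn
  refine .of_bound (f.continuous.aestronglyMeasurable.indicator hK.measurableSet) |C|
    (.of_forall fun x ↦ ?_)
  by_cases hx : x ∈ K
  · simpa only [indicator_of_mem hx] using (hC x hx).trans (le_abs_self C)
  · simp only [indicator_of_notMem hx, norm_zero, abs_nonneg]

variable (hK : IsCompact K) (μ : Measure X) [IsFiniteMeasure μ]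

/-- The test function `f · 1_K` as an element of `L²(μ)`, linear in the continuous function `f`.
Cutting off sharply at the edge of `K` lets test functions that vanish on the boundary of `K` be
handled without extending them continuously. -/
def cutoffLp : C(X, ℝ) →ₗ[ℝ] Lp ℝ 2 μ where
  toFun f := (memLp_indicator_continuousMap hK μ f).toLp (K.indicator f)
  map_add' f g := by
    rw [← MemLp.toLp_add]
    congr 1
    exact indicator_add K f g
  map_smul' c f := by
    rw [RingHom.id_apply, ← MemLp.toLp_const_smul]
    congr 1
    exact indicator_const_smul K c f

theorem coeFn_cutoffLp (f : C(X, ℝ)) : cutoffLp hK μ f =ᵐ[μ] K.indicator f :=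
  (memLp_indicator_continuousMap hK μ f).coeFn_toLp

theorem norm_cutoffLp_le {f : C(X, ℝ)} {C : ℝ} (hC : 0 ≤ C) (hf : ∀ x ∈ K, ‖f x‖ ≤ C) :
    ‖cutoffLp hK μ f‖ ≤ measureUnivNNReal μ ^ (ENNReal.toReal 2)⁻¹ * C := by
  refine Lp.norm_le_of_ae_bound hC ?_
  filter_upwards [coeFn_cutoffLp hK μ f] with x hx
  rw [hx]
  by_cases hxK : x ∈ K
  · simpa only [indicator_of_mem hxK] using hf x hxK
  · simpa only [indicator_of_notMem hxK, norm_zero] using hC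

theorem continuous_cutoffLp : Continuous (cutoffLp hK μ) := by
  refine continuous_iff_continuousAt.2 fun f ↦ Metric.tendsto_nhds.2 fun ε hε ↦ ?_
  set M : ℝ := measureUnivNNReal μ ^ (ENNReal.toReal 2)⁻¹
  have : 0 ≤ M := by positivity
  have hunif := Metric.tendstoUniformlyOn_iff.1
    (ContinuousMap.tendsto_iff_forall_isCompact_tendstoUniformlyOn.1 (tendsto_id (x := 𝓝 f)) K hK)
    (ε / (M + 1)) (by positivity)
  filter_upwards [hunif] with g hg
  rw [dist_eq_norm, ← map_sub]
  calc ‖cutoffLp hK μ (g - f)‖ ≤ M * (ε / (M + 1)) :=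
        norm_cutoffLp_le hK μ (by positivity) fun x hx ↦ by
          rw [ContinuousMap.sub_apply, ← dist_eq_norm, dist_comm]
          exact (hg x hx).le
    _ < ε := by rw [mul_div_assoc', div_lt_iff₀ (by positivity)]; linarith

theorem hasDerivAt_cutoffLp {ψ ψ' : ℝ → C(X, ℝ)} {σ : ℝ}
    (hψ : ∀ᶠ s in 𝓝 σ, ∀ x ∈ K, HasDerivAt (fun r ↦ ψ r x) (ψ' s x) s)
    (hψ' : ContinuousAt ψ' σ) :
    HasDerivAt (fun s ↦ cutoffLp hK μ (ψ s)) (cutoffLp hK μ (ψ' σ)) σ := by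
  set M : ℝ := measureUnivNNReal μ ^ (ENNReal.toReal 2)⁻¹
  have : 0 ≤ M := by positivity
  rw [hasDerivAt_iff_isLittleO, Asymptotics.isLittleO_iff]
  intro ε hε
  obtain ⟨ε', hε', hle⟩ : ∃ ε' > 0, M * ε' ≤ ε :=
    ⟨ε / (M + 1), by positivity, by
      rw [mul_div_assoc', div_le_iff₀ (by positivity)]; nlinarith⟩
  have hunif := Metric.tendstoUniformlyOn_iff.1
    (ContinuousMap.tendsto_iff_forall_isCompact_tendstoUniformlyOn.1 hψ' K hK) ε' hε'
  obtain ⟨δ, hδ, hball⟩ := Metric.eventually_nhds_iff_ball.1 (hψ.and hunif)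
  filter_upwards [Metric.ball_mem_nhds σ hδ] with s hs
  have hbound : ∀ x ∈ K, ‖(ψ s - ψ σ - (s - σ) • ψ' σ) x‖ ≤ ε' * ‖s - σ‖ := by
    intro x hx
    have hderiv : ∀ r ∈ Metric.ball σ δ,
        HasDerivWithinAt (fun r ↦ ψ r x - r * ψ' σ x) (ψ' r x - ψ' σ x) (Metric.ball σ δ) r :=
      fun r hr ↦ (((hball r hr).1 x hx).sub (hasDerivAt_mul_const (ψ' σ x))).hasDerivWithinAt
    have hsplit : (ψ s - ψ σ - (s - σ) • ψ' σ) x =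
        (ψ s x - s * ψ' σ x) - (ψ σ x - σ * ψ' σ x) := by
      simp only [ContinuousMap.sub_apply, ContinuousMap.smul_apply, smul_eq_mul]
      ring
    rw [hsplit]
    refine (convex_ball σ δ).norm_image_sub_le_of_norm_hasDerivWithin_le hderiv (fun r hr ↦ ?_)
      (Metric.mem_ball_self hδ) hs
    rw [← dist_eq_norm, dist_comm]
    exact ((hball r hr).2 x hx).le
  rw [← map_sub, ← map_smul, ← map_sub]
  calc ‖cutoffLp hK μ (ψ s - ψ σ - (s - σ) • ψ' σ)‖
      ≤ M * (ε' * ‖s - σ‖) := norm_cutoffLp_le hK μ (by positivity) hbound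
    _ ≤ ε * ‖s - σ‖ := by
      rw [← mul_assoc]
      gcongr

theorem inner_cutoffLp (v : Lp ℝ 2 μ) (f : C(X, ℝ)) :
    inner ℝ v (cutoffLp hK μ f) = ∫ x in K, v x * f x ∂μ := by
  rw [L2.inner_def, ← integral_indicator hK.measurableSet]
  apply integral_congr_ae
  filter_upwards [coeFn_cutoffLp hK μ f] with x hx
  rw [hx, indicator_mul_right, mul_comm]
  rfl

variable {μ}

theorem inner_cutoffLp_nonneg {v : Lp ℝ 2 μ} {f : C(X, ℝ)} (hv : 0 ≤ v) (hf : ∀ x ∈ K, 0 ≤ f x) :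
    0 ≤ inner ℝ v (cutoffLp hK μ f) := by
  rw [inner_cutoffLp]
  refine integral_nonneg_of_ae ?_
  filter_upwards [ae_restrict_mem hK.measurableSet, ae_restrict_of_ae (Lp.coeFn_nonneg v |>.2 hv)]
    with x hx hvx using mul_nonneg hvx (hf x hx)

theorem inner_cutoffLp_mono_left {v w : Lp ℝ 2 μ} {f : C(X, ℝ)} (hvw : v ≤ w)
    (hf : ∀ x ∈ K, 0 ≤ f x) : inner ℝ v (cutoffLp hK μ f) ≤ inner ℝ w (cutoffLp hK μ f) := by
  rw [← sub_nonneg, ← inner_sub_left]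
  exact inner_cutoffLp_nonneg hK (sub_nonneg.2 hvw) hf

theorem inner_cutoffLp_mono_right {v : Lp ℝ 2 μ} {f g : C(X, ℝ)} (hv : 0 ≤ v)
    (hfg : ∀ x ∈ K, f x ≤ g x) : inner ℝ v (cutoffLp hK μ f) ≤ inner ℝ v (cutoffLp hK μ g) := by
  rw [← sub_nonneg, ← inner_sub_right, ← map_sub]
  exact inner_cutoffLp_nonneg hK hv fun x hx ↦ sub_nonneg.2 (hfg x hx)

theorem ae_mul_eq_zero_of_inner_cutoffLp_nonpos {v : Lp ℝ 2 μ} {f : C(X, ℝ)} (hv : 0 ≤ v)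
    (hf : ∀ x ∈ K, 0 ≤ f x) (h : inner ℝ v (cutoffLp hK μ f) ≤ 0) :
    ∀ᵐ x ∂μ, x ∈ K → v x * f x = 0 := by
  have hint : IntegrableOn (fun x ↦ v x * f x) K μ :=
    ((Lp.memLp v).integrable one_le_two).integrableOn.mul_continuousOn
      f.continuous.continuousOn hK
  have hnonneg : 0 ≤ᵐ[μ.restrict K] fun x ↦ v x * f x := by
    filter_upwards [ae_restrict_mem hK.measurableSet, ae_restrict_of_ae (Lp.coeFn_nonneg v |>.2 hv)]
      with x hx hvx using mul_nonneg hvx (hf x hx)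
  rw [inner_cutoffLp] at h
  have hzero := (integral_eq_zero_iff_of_nonneg_ae hnonneg hint).1
    (h.antisymm (integral_nonneg_of_ae hnonneg))
  exact (ae_restrict_iff' hK.measurableSet).1 hzero

end CutoffLp

section HeatKernel

/-- The one-dimensional heat kernel at time `σ`, the solution of `∂_σ G = ∂_y² G` with initial
value the Dirac mass at `0`. -/
def heatKernel (σ y : ℝ) : ℝ := Real.exp (-y ^ 2 / (4 * σ)) / √(4 * Real.pi * σ)

/-- The common value of `∂_σ` and `∂_y²` of the heat kernel. -/
def heatKernelLaplacian (σ y : ℝ) : ℝ := heatKernel σ y * (y ^ 2 / (4 * σ ^ 2) - 1 / (2 * σ))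

@[fun_prop]
theorem continuous_heatKernel (σ : ℝ) : Continuous (heatKernel σ) := by
  unfold heatKernel
  fun_prop

@[fun_prop]
theorem continuous_heatKernelLaplacian (σ : ℝ) : Continuous (heatKernelLaplacian σ) := by
  unfold heatKernelLaplacian
  fun_prop

theorem continuousOn_uncurry_heatKernelLaplacian :
    ContinuousOn (Function.uncurry heatKernelLaplacian) (Ioi 0 ×ˢ univ) := by
  have hσ : ∀ z ∈ Ioi (0 : ℝ) ×ˢ (univ : Set ℝ), 0 < z.1 := fun z hz ↦ hz.1
  refine .mul (.div (.rexp (.div ?_ ?_ ?_)) ?_ ?_) (.sub (.div ?_ ?_ ?_) (.div ?_ ?_ ?_)) <;>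
    first | fun_prop | exact fun z hz ↦ by have := hσ z hz; positivity

theorem heatKernel_pos {σ : ℝ} (hσ : 0 < σ) (y : ℝ) : 0 < heatKernel σ y := by
  unfold heatKernel
  positivity

theorem hasDerivAt_heatKernel_space {σ : ℝ} (hσ : 0 < σ) (y : ℝ) :
    HasDerivAt (heatKernel σ) (heatKernel σ y * (-y / (2 * σ))) y := by
  have hexponent : HasDerivAt (fun y ↦ -y ^ 2 / (4 * σ)) (-y / (2 * σ)) y := by
    convert! ((hasDerivAt_pow 2 y).neg.div_const (4 * σ)) using 1
    field_simp
    ring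
  convert! hexponent.exp.div_const √(4 * Real.pi * σ) using 1
  unfold heatKernel
  ring

theorem hasDerivAt_deriv_heatKernel_space {σ : ℝ} (hσ : 0 < σ) (y : ℝ) :
    HasDerivAt (fun y ↦ heatKernel σ y * (-y / (2 * σ))) (heatKernelLaplacian σ y) y := by
  convert! (hasDerivAt_heatKernel_space hσ y).fun_mul ((hasDerivAt_neg y).div_const (2 * σ)) using 1
  unfold heatKernelLaplacian
  field_simp
  ring

theorem hasDerivAt_heatKernel_time {σ : ℝ} (hσ : 0 < σ) (y : ℝ) :
    HasDerivAt (fun s ↦ heatKernel s y) (heatKernelLaplacian σ y) σ := by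
  have hexponent : HasDerivAt (fun s ↦ -y ^ 2 / (4 * s)) (y ^ 2 / (4 * σ ^ 2)) σ := by
    convert! (hasDerivAt_const σ (-y ^ 2)).fun_div ((hasDerivAt_id' σ).const_mul 4) (by positivity)
      using 1
    field_simp
    ring
  have hsqrt : HasDerivAt (fun s ↦ √(4 * Real.pi * s))
      (4 * Real.pi * 1 / (2 * √(4 * Real.pi * σ))) σ :=
    ((hasDerivAt_id' σ).const_mul (4 * Real.pi)).sqrt (by positivity)
  have hroot : √(4 * Real.pi * σ) ≠ 0 := by positivity
  have hsq : √(4 * Real.pi * σ) ^ 2 = 4 * Real.pi * σ := Real.sq_sqrt (by positivity)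
  convert! hexponent.exp.fun_div hsqrt hroot using 1
  unfold heatKernelLaplacian heatKernel
  generalize √(4 * Real.pi * σ) = r at hroot hsq ⊢
  field_simp
  linear_combination (-4 * σ) * hsq

theorem heatKernelLaplacian_nonneg {σ y : ℝ} (hσ : 0 < σ) (hy : σ ≤ y ^ 2 / 2) :
    0 ≤ heatKernelLaplacian σ y := by
  refine mul_nonneg (heatKernel_pos hσ y).le (sub_nonneg.2 ?_)
  rw [div_le_div_iff₀ (by positivity) (by positivity)]
  nlinarith

theorem heatKernel_le_heatKernel {σ y z : ℝ} (hσ : 0 ≤ σ) (hyz : |y| ≤ |z|) :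
    heatKernel σ z ≤ heatKernel σ y := by
  have := sq_le_sq.2 hyz
  unfold heatKernel
  gcongr

theorem heatKernel_lt_heatKernel {σ y z : ℝ} (hσ : 0 < σ) (hyz : |y| < |z|) :
    heatKernel σ z < heatKernel σ y := by
  have := sq_lt_sq.2 hyz
  unfold heatKernel
  gcongr

theorem heatKernel_one (y : ℝ) :
    heatKernel 1 y = Real.exp (-(1 / 4) * y ^ 2) / √(4 * Real.pi) := by
  unfold heatKernel
  ring_nf

theorem integral_heatKernel_one : ∫ y, heatKernel 1 y = 1 := by
  simp_rw [heatKernel_one]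
  rw [integral_div, integral_gaussian, div_div_eq_mul_div, div_one, mul_comm,
    div_self (by positivity)]

theorem heatKernel_eq_inv_sqrt_mul {σ : ℝ} (hσ : 0 < σ) (y : ℝ) :
    heatKernel σ y = (√σ)⁻¹ * heatKernel 1 ((√σ)⁻¹ * y) := by
  unfold heatKernel
  have hsq : (√σ) ^ 2 = σ := Real.sq_sqrt hσ.le
  rw [Real.sqrt_mul (by positivity) σ, mul_one, mul_one, mul_pow, inv_pow, hsq]
  field_simp

theorem tendsto_norm_mul_heatKernel_one_cobounded :
    Tendsto (fun y ↦ ‖y‖ ^ Module.finrank ℝ ℝ * heatKernel 1 y) (Bornology.cobounded ℝ) (𝓝 0) := by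
  have hdecay := (tendsto_rpow_abs_mul_exp_neg_mul_sq_cocompact (a := 1 / 4)
    (by norm_num) 1).div_const √(4 * Real.pi)
  rw [zero_div, ← Metric.cobounded_eq_cocompact] at hdecay
  refine hdecay.congr fun y ↦ ?_
  rw [heatKernel_one, Module.finrank_self, pow_one, Real.rpow_one, Real.norm_eq_abs, mul_div_assoc]

theorem tendsto_integral_mul_heatKernel {f : ℝ → ℝ} {x₀ : ℝ} (hf : Integrable f)
    (hcont : ContinuousAt f x₀) :
    Tendsto (fun σ ↦ ∫ x, f x * heatKernel σ (x - x₀)) (𝓝[>] 0) (𝓝 (f x₀)) := by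
  have hscale : Tendsto (fun σ ↦ (√σ)⁻¹) (𝓝[>] 0) atTop := by
    refine tendsto_inv_nhdsGT_zero.comp (tendsto_nhdsWithin_iff.2 ⟨?_, ?_⟩)
    · simpa using Real.continuous_sqrt.continuousAt.tendsto.mono_left (nhdsWithin_le_nhds (a := 0))
    · filter_upwards [self_mem_nhdsWithin] with σ hσ using Real.sqrt_pos.2 hσ
  have hlim := (tendsto_integral_comp_smul_smul_of_integrable' (μ := volume)
    (fun y ↦ (heatKernel_pos one_pos y).le) integral_heatKernel_one
    tendsto_norm_mul_heatKernel_one_cobounded hf hcont).comp hscale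
  refine hlim.congr' ?_
  filter_upwards [self_mem_nhdsWithin] with σ hσ
  refine integral_congr_ae (.of_forall fun x ↦ ?_)
  have heven : heatKernel 1 ((√σ)⁻¹ * (x₀ - x)) = heatKernel 1 ((√σ)⁻¹ * (x - x₀)) := by
    unfold heatKernel
    ring_nf
  simp only [Module.finrank_self, pow_one, smul_eq_mul, heven]
  rw [heatKernel_eq_inv_sqrt_mul hσ, mul_comm]

theorem tendsto_intervalIntegral_mul_heatKernel {f : ℝ → ℝ} {p q x₀ : ℝ}
    (hf : ContinuousOn f (Icc p q)) (hx₀ : x₀ ∈ Ioo p q) :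
    Tendsto (fun σ ↦ ∫ x in p..q, f x * heatKernel σ (x - x₀)) (𝓝[>] 0) (𝓝 (f x₀)) := by
  have hnhds : Icc p q ∈ 𝓝 x₀ := Icc_mem_nhds hx₀.1 hx₀.2
  have heq : f =ᶠ[𝓝 x₀] (Icc p q).indicator f := by
    filter_upwards [hnhds] with x hx using (indicator_of_mem hx f).symm
  have hlim := tendsto_integral_mul_heatKernel
    ((integrable_indicator_iff measurableSet_Icc).2 hf.integrableOn_Icc)
    ((hf.continuousAt hnhds).congr heq)
  rw [indicator_of_mem (mem_of_mem_nhds hnhds)] at hlim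
  refine hlim.congr fun σ ↦ ?_
  rw [intervalIntegral.integral_of_le (hx₀.1.trans hx₀.2).le, ← integral_Icc_eq_integral_Ioc,
    ← integral_indicator measurableSet_Icc]
  simp only [indicator_mul_left]

end HeatKernel

section TruncatedHeatKernel

/-- The heat kernel centred at `x₀`, lowered so as to vanish at distance `L` from `x₀`. On
`[x₀ - L, x₀ + L]` it is a nonnegative test function, and a subsolution of the heat equation as long
as `heatKernel σ L` is nondecreasing in `σ`, that is, for `σ ≤ L² / 2`. -/
def truncatedHeatKernel (x₀ L σ : ℝ) : C(ℝ, ℝ) :=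
  ⟨fun x ↦ heatKernel σ (x - x₀) - heatKernel σ L, by fun_prop⟩

/-- The time derivative of `truncatedHeatKernel`. -/
def truncatedHeatKernelTimeDeriv (x₀ L σ : ℝ) : C(ℝ, ℝ) :=
  ⟨fun x ↦ heatKernelLaplacian σ (x - x₀) - heatKernelLaplacian σ L, by fun_prop⟩

/-- The second space derivative of `truncatedHeatKernel`. -/
def truncatedHeatKernelLaplacian (x₀ σ : ℝ) : C(ℝ, ℝ) :=
  ⟨fun x ↦ heatKernelLaplacian σ (x - x₀), by fun_prop⟩

theorem truncatedHeatKernel_sub_eq_zero (x₀ L σ : ℝ) : truncatedHeatKernel x₀ L σ (x₀ - L) = 0 := by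
  simp only [truncatedHeatKernel, heatKernel, ContinuousMap.coe_mk, sub_sub_cancel_left, neg_sq,
    sub_self]

theorem truncatedHeatKernel_add_eq_zero (x₀ L σ : ℝ) : truncatedHeatKernel x₀ L σ (x₀ + L) = 0 := by
  simp only [truncatedHeatKernel, ContinuousMap.coe_mk, add_sub_cancel_left, sub_self]

theorem truncatedHeatKernel_nonneg {x₀ L σ x : ℝ} (hσ : 0 ≤ σ) (hx : x ∈ Icc (x₀ - L) (x₀ + L)) :
    0 ≤ truncatedHeatKernel x₀ L σ x := by
  refine sub_nonneg.2 (heatKernel_le_heatKernel hσ (le_trans ?_ (le_abs_self L)))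
  rw [abs_le]
  constructor <;> linarith [hx.1, hx.2]

theorem truncatedHeatKernel_pos {x₀ L σ x : ℝ} (hσ : 0 < σ) (hx : x ∈ Ioo (x₀ - L) (x₀ + L)) :
    0 < truncatedHeatKernel x₀ L σ x := by
  refine sub_pos.2 (heatKernel_lt_heatKernel hσ (lt_of_lt_of_le ?_ (le_abs_self L)))
  rw [abs_lt]
  constructor <;> linarith [hx.1, hx.2]

theorem truncatedHeatKernelTimeDeriv_le_laplacian {x₀ L σ : ℝ} (hσ : 0 < σ) (hL : σ ≤ L ^ 2 / 2)
    (x : ℝ) : truncatedHeatKernelTimeDeriv x₀ L σ x ≤ truncatedHeatKernelLaplacian x₀ σ x :=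
  sub_le_self _ (heatKernelLaplacian_nonneg hσ hL)

theorem continuousOn_truncatedHeatKernelTimeDeriv (x₀ L : ℝ) :
    ContinuousOn (truncatedHeatKernelTimeDeriv x₀ L) (Ioi 0) := by
  apply ContinuousMap.continuousOn_of_continuousOn_uncurry
  exact (continuousOn_uncurry_heatKernelLaplacian.comp
      (f := fun z : ℝ × ℝ ↦ (z.1, z.2 - x₀)) (by fun_prop) fun z hz ↦ ⟨hz.1, mem_univ _⟩).sub
    (continuousOn_uncurry_heatKernelLaplacian.comp
      (f := fun z : ℝ × ℝ ↦ (z.1, L)) (by fun_prop) fun z hz ↦ ⟨hz.1, mem_univ _⟩)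

theorem hasDerivAt_cutoffLp_truncatedHeatKernel {K : Set ℝ} (hK : IsCompact K) (μ : Measure ℝ)
    [IsFiniteMeasure μ] (x₀ L : ℝ) {σ : ℝ} (hσ : 0 < σ) :
    HasDerivAt (fun s ↦ cutoffLp hK μ (truncatedHeatKernel x₀ L s))
      (cutoffLp hK μ (truncatedHeatKernelTimeDeriv x₀ L σ)) σ := by
  refine hasDerivAt_cutoffLp hK μ ?_
    ((continuousOn_truncatedHeatKernelTimeDeriv x₀ L).continuousAt (Ioi_mem_nhds hσ))
  filter_upwards [Ioi_mem_nhds hσ] with s hs x _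
  exact (hasDerivAt_heatKernel_time hs (x - x₀)).sub (hasDerivAt_heatKernel_time hs L)

theorem absolutelyContinuousOnInterval_cutoffLp_truncatedHeatKernel_const_sub {K : Set ℝ}
    (hK : IsCompact K) (μ : Measure ℝ) [IsFiniteMeasure μ] (x₀ L : ℝ) {a b c : ℝ}
    (hc : ∀ t ∈ uIcc a b, t < c) :
    AbsolutelyContinuousOnInterval (fun t ↦ cutoffLp hK μ (truncatedHeatKernel x₀ L (c - t)))
      a b := by
  refine absolutelyContinuousOnInterval_of_hasDerivAt (fun t ht ↦
    (hasDerivAt_cutoffLp_truncatedHeatKernel hK μ x₀ L (sub_pos.2 (hc t ht))).comp_const_sub c t)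
    (.neg ?_)
  exact (continuous_cutoffLp hK μ).comp_continuousOn
    ((continuousOn_truncatedHeatKernelTimeDeriv x₀ L).comp (by fun_prop)
      fun t ht ↦ sub_pos.2 (hc t ht))

end TruncatedHeatKernel

section InDomainA

instance : IsFiniteMeasure μ01 := by
  unfold μ01
  infer_instance

/-- Truncation of continuous functions to `[p, q]`, as elements of `H`. -/
abbrev cutoffIcc (p q : ℝ) : C(ℝ, ℝ) →ₗ[ℝ] Hsp :=
  cutoffLp (isCompact_Icc (a := p) (b := q)) μ01

theorem setIntegral_Icc_μ01 {f : ℝ → ℝ} {p q : ℝ} (hpq : p ≤ q) (hsub : Icc p q ⊆ Ioo 0 1) :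
    ∫ x in Icc p q, f x ∂μ01 = ∫ x in p..q, f x := by
  rw [μ01, Measure.restrict_restrict_of_subset hsub, integral_Icc_eq_integral_Ioc,
    intervalIntegral.integral_of_le hpq]

theorem intervalIntegrable_Hsp (w : Hsp) : IntervalIntegrable w volume 0 1 := by
  rw [intervalIntegrable_iff_integrableOn_Ioo_of_le zero_le_one]
  exact (Lp.memLp w).integrable one_le_two

theorem ae_hasDerivAt_of_sub_eq_integral {w : Hsp} {g : ℝ → ℝ}
    (hg : ∀ x ∈ Ioo (0 : ℝ) 1, ∀ y ∈ Ioo (0 : ℝ) 1, g x - g y = ∫ z in y..x, w z) :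
    ∀ᵐ x ∂μ01, HasDerivAt g (w x) x :=
  ae_hasDerivAt_of_eq_add_integral (c := 1 / 2) (by norm_num) (intervalIntegrable_Hsp w)
    fun x hx ↦ eq_add_of_sub_eq' (hg x hx (1 / 2) (by norm_num))

theorem InDomainA.ae_eq_zero {v w : Hsp} (h : InDomainA v w) : ∀ᵐ x ∂μ01, v x = 0 → w x = 0 := by
  obtain ⟨vt, -, -, -, hvt, g, hg, hgw⟩ := h
  filter_upwards [hvt, ae_restrict_of_ae (ae_deriv_eq_zero_of_eq vt 0),
    ae_restrict_of_ae (ae_deriv_eq_zero_of_eq g 0), ae_hasDerivAt_of_sub_eq_integral hgw,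
    ae_restrict_mem measurableSet_Ioo] with x hx hvt0 hg0 hgx hxI hv
  rw [← hgx.deriv]
  apply hg0
  rw [← (hg x hxI).deriv]
  exact hvt0 (hx.trans hv)

theorem InDomainA.inner_cutoffLp_le {v w : Hsp} (h : InDomainA v w) (hv : 0 ≤ v) {p q : ℝ}
    (hpq : p ≤ q) (hsub : Icc p q ⊆ Ioo 0 1) {φ φ'' : C(ℝ, ℝ)} {φ' : ℝ → ℝ}
    (hφ : ∀ x ∈ Icc p q, HasDerivAt φ (φ' x) x) (hφ' : ∀ x ∈ Icc p q, HasDerivAt φ' (φ'' x) x)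
    (hp : φ p = 0) (hq : φ q = 0) (hp' : 0 ≤ φ' p) (hq' : φ' q ≤ 0) :
    inner ℝ v (cutoffIcc p q φ'') ≤ inner ℝ w (cutoffIcc p q φ) := by
  obtain ⟨vt, hcont, -, -, hvt, g, hg, hgw⟩ := h
  have hIcc : uIcc p q = Icc p q := uIcc_of_le hpq
  have hint (z : Hsp) : IntervalIntegrable z volume p q :=
    (intervalIntegrable_Hsp z).mono_set <| by
      rw [hIcc, uIcc_of_le zero_le_one]
      exact hsub.trans Ioo_subset_Icc_self
  have hpos : ∀ x ∈ Ioo (0 : ℝ) 1, 0 ≤ vt x := by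
    refine nonneg_of_ae_nonneg_of_continuousOn_Ioo (hcont.mono Ioo_subset_Icc_self) ?_
    filter_upwards [hvt, (Lp.coeFn_nonneg v).2 hv] with x hx hvx using hx ▸ hvx
  have hgac : AbsolutelyContinuousOnInterval g p q :=
    absolutelyContinuousOnInterval_of_eq_add_integral (hint w) fun x hx ↦
      eq_add_of_sub_eq' (hgw x (hsub (hIcc ▸ hx)) p (hsub (left_mem_Icc.2 hpq)))
  have hφac : AbsolutelyContinuousOnInterval φ' p q :=
    absolutelyContinuousOnInterval_of_hasDerivAt (hIcc ▸ hφ') φ''.continuous.continuousOn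
  have hgreen := integral_deriv_mul_sub_mul_deriv_nonneg (fun x hx ↦ hg x (hsub (hIcc ▸ hx)))
    (hIcc ▸ hφ) hgac hφac (hpos p (hsub (left_mem_Icc.2 hpq)))
    (hpos q (hsub (right_mem_Icc.2 hpq))) hp hq hp' hq'
  rw [inner_cutoffLp, inner_cutoffLp, setIntegral_Icc_μ01 hpq hsub, setIntegral_Icc_μ01 hpq hsub,
    ← sub_nonneg, ← intervalIntegral.integral_sub
      ((hint w).mul_continuousOn φ.continuous.continuousOn)
      ((hint v).mul_continuousOn φ''.continuous.continuousOn)]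
  refine hgreen.trans_eq (intervalIntegral.integral_congr_ae ?_)
  filter_upwards [(ae_restrict_iff' measurableSet_Ioo).1 hvt,
    (ae_restrict_iff' measurableSet_Ioo).1 (ae_hasDerivAt_of_sub_eq_integral hgw)] with x hx hgx hxI
  have hxI : x ∈ Icc p q := hIcc ▸ uIoc_subset_uIcc hxI
  rw [(hgx (hsub hxI)).deriv, (hφ' x hxI).deriv, hx (hsub hxI)]

theorem inner_truncatedHeatKernel_le_integral {v : Hsp} (hv : 0 ≤ v) {vt : ℝ → ℝ}
    (hvt : ∀ᵐ x ∂μ01, vt x = v x) {p q x₀ L σ : ℝ} (hpq : p ≤ q) (hsub : Icc p q ⊆ Ioo 0 1)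
    (hσ : 0 < σ) :
    inner ℝ v (cutoffIcc p q (truncatedHeatKernel x₀ L σ)) ≤
      ∫ x in p..q, vt x * heatKernel σ (x - x₀) := by
  have hle : ∀ x ∈ Icc p q, truncatedHeatKernel x₀ L σ x ≤
      (⟨fun x ↦ heatKernel σ (x - x₀), by fun_prop⟩ : C(ℝ, ℝ)) x :=
    fun x _ ↦ sub_le_self _ (heatKernel_pos hσ L).le
  refine (inner_cutoffLp_mono_right _ hv hle).trans_eq ?_
  rw [inner_cutoffLp, ← setIntegral_Icc_μ01 hpq hsub]
  refine integral_congr_ae (ae_restrict_of_ae ?_)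
  filter_upwards [hvt] with x hx
  rw [hx, ContinuousMap.coe_mk]

end InDomainA

section Supersolution

/-- A nonnegative supersolution `u' ≥ uxx` of the heat equation on `[s, τ]` with Dirichlet boundary
conditions, as an absolutely continuous `H`-valued curve with time derivative `u'` and second space
derivative `uxx`. -/
structure IsNonnegSupersolution (s τ : ℝ) (u u' uxx : ℝ → Hsp) : Prop where
  absolutelyContinuous : AbsolutelyContinuousOnInterval u s τ
  nonneg : ∀ t ∈ Icc s τ, 0 ≤ u t
  ae_hasDerivAt : ∀ᵐ t ∂volume.restrict (Ioo s τ), HasDerivAt u (u' t) t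
  ae_inDomainA : ∀ᵐ t ∂volume.restrict (Ioo s τ), InDomainA (u t) (uxx t)
  ae_le : ∀ᵐ t ∂volume.restrict (Ioo s τ), uxx t ≤ u' t

theorem eq_one_of_mem_heaviside {s h : ℝ} (hs : 0 < s) (hh : h ∈ heaviside s) : h = 1 := by
  simpa only [heaviside, if_neg hs.not_gt, if_neg hs.ne', mem_singleton_iff] using hh

theorem InDomainA.le_of_mem_heaviside {v w r u' : Hsp} {β γ : ℝ} (h : InDomainA v w) (hv : 0 ≤ v)
    (hβ : 0 ≤ β) (hγ : 0 ≤ γ)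
    (hr : ∀ᵐ x ∂μ01, ∃ h ∈ heaviside (v x), r x = β * h + γ * v x) (hu' : u' = r + w)
    (hnonneg : ∀ᵐ x ∂μ01, v x = 0 → 0 ≤ u' x) : w ≤ u' := by
  rw [← Lp.coeFn_le]
  filter_upwards [(Lp.coeFn_nonneg v).2 hv, hr, h.ae_eq_zero, hnonneg, hu' ▸ Lp.coeFn_add r w]
    with x hvx ⟨θ, hθ, hrx⟩ hwx hu'x hsum
  rcases hvx.eq_or_lt with hzero | hpos
  · exact (hwx hzero.symm).trans_le (hu'x hzero.symm)
  · rw [hsum, Pi.add_apply, hrx, eq_one_of_mem_heaviside hpos hθ]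
    exact le_add_of_nonneg_left (add_nonneg ((mul_one β).symm ▸ hβ) (mul_nonneg hγ hvx))

theorem IsStrongSolutionWith.isNonnegSupersolution {b ω : ℝ → ℝ} (hb : ∀ t, 0 ≤ b t)
    (hω : ∀ t, 0 ≤ ω t) {t₀ s τ : ℝ} {u r u' uxx : ℝ → Hsp}
    (hu : IsStrongSolutionWith b ω t₀ u r u' uxx) (hnn : NonnegOn u t₀) (hs : t₀ < s)
    (hsτ : s < τ) : IsNonnegSupersolution s τ u u' uxx := by
  obtain ⟨hint, hfund⟩ := hu.fund s τ hs hsτ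
  have hnonneg : ∀ t, t₀ ≤ t → 0 ≤ u t := fun t ht ↦ (Lp.coeFn_nonneg _).1 (hnn t ht)
  have hsub : Ioo s τ ⊆ Ioi t₀ := fun t ht ↦ hs.trans ht.1
  have hderiv : ∀ᵐ t ∂volume.restrict (Ioo s τ), HasDerivAt u (u' t) t :=
    ae_hasDerivAt_of_eq_add_integral (left_mem_Icc.2 hsτ.le) hint fun t ht ↦
      hfund t (Ioo_subset_Icc_self ht)
  have hdom := ae_restrict_of_ae_restrict_of_subset hsub hu.dom
  refine ⟨absolutelyContinuousOnInterval_of_eq_add_integral hint (uIcc_of_le hsτ.le ▸ hfund),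
    fun t ht ↦ hnonneg t (hs.le.trans ht.1), hderiv, hdom, ?_⟩
  filter_upwards [hderiv, hdom, ae_restrict_of_ae_restrict_of_subset hsub hu.sel,
    ae_restrict_of_ae_restrict_of_subset hsub hu.eq, ae_restrict_mem measurableSet_Ioo]
    with t hut hdt hsel heq ht
  refine hdt.le_of_mem_heaviside (hnonneg t (hsub ht).le) (hb t) (hω t) hsel heq
    (ae_eq_zero_imp_deriv_nonneg_of_hasDerivWithinAt hut.hasDerivWithinAt ?_)
  filter_upwards [self_mem_nhdsWithin] with t' ht' using hnn t' ((hsub ht).trans ht').le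

theorem InDomainA.inner_truncatedHeatKernelTimeDeriv_le {v w : Hsp} (h : InDomainA v w)
    (hv : 0 ≤ v) {x₀ L σ : ℝ} (hL : 0 ≤ L) (hsub : Icc (x₀ - L) (x₀ + L) ⊆ Ioo 0 1) (hσ : 0 < σ)
    (hσL : σ ≤ L ^ 2 / 2) :
    inner ℝ v (cutoffIcc (x₀ - L) (x₀ + L) (truncatedHeatKernelTimeDeriv x₀ L σ)) ≤
      inner ℝ w (cutoffIcc (x₀ - L) (x₀ + L) (truncatedHeatKernel x₀ L σ)) := by
  refine (inner_cutoffLp_mono_right _ hv fun x _ ↦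
    truncatedHeatKernelTimeDeriv_le_laplacian hσ hσL x).trans ?_
  refine h.inner_cutoffLp_le hv (by linarith) hsub
    (φ' := fun x ↦ heatKernel σ (x - x₀) * (-(x - x₀) / (2 * σ)))
    (fun x _ ↦ ((hasDerivAt_heatKernel_space hσ _).comp_sub_const x x₀).sub_const _)
    (fun x _ ↦ (hasDerivAt_deriv_heatKernel_space hσ _).comp_sub_const x x₀)
    (truncatedHeatKernel_sub_eq_zero x₀ L σ) (truncatedHeatKernel_add_eq_zero x₀ L σ) ?_ ?_
  · rw [sub_sub_cancel_left, neg_neg]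
    exact mul_nonneg (heatKernel_pos hσ _).le (by positivity)
  · rw [add_sub_cancel_left, neg_div, mul_neg, neg_nonpos]
    exact mul_nonneg (heatKernel_pos hσ _).le (by positivity)

namespace IsNonnegSupersolution

variable {s τ : ℝ} {u u' uxx : ℝ → Hsp}

theorem mono {s' : ℝ} (h : IsNonnegSupersolution s τ u u' uxx) (hs : s ≤ s') (hτ : s' ≤ τ) :
    IsNonnegSupersolution s' τ u u' uxx where
  absolutelyContinuous := h.absolutelyContinuous.mono <| by
    rw [uIcc_of_le hτ, uIcc_of_le (hs.trans hτ)]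
    exact Icc_subset_Icc_left hs
  nonneg t ht := h.nonneg t ⟨hs.trans ht.1, ht.2⟩
  ae_hasDerivAt := ae_restrict_of_ae_restrict_of_subset (Ioo_subset_Ioo_left hs) h.ae_hasDerivAt
  ae_inDomainA := ae_restrict_of_ae_restrict_of_subset (Ioo_subset_Ioo_left hs) h.ae_inDomainA
  ae_le := ae_restrict_of_ae_restrict_of_subset (Ioo_subset_Ioo_left hs) h.ae_le

theorem inner_truncatedHeatKernel_le (h : IsNonnegSupersolution s τ u u' uxx) (hsτ : s ≤ τ)
    {x₀ L c : ℝ} (hL : 0 ≤ L) (hsub : Icc (x₀ - L) (x₀ + L) ⊆ Ioo 0 1) (hc : τ < c)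
    (hcL : c - s ≤ L ^ 2 / 2) :
    inner ℝ (u s) (cutoffIcc (x₀ - L) (x₀ + L) (truncatedHeatKernel x₀ L (c - s))) ≤
      inner ℝ (u τ) (cutoffIcc (x₀ - L) (x₀ + L) (truncatedHeatKernel x₀ L (c - τ))) := by
  set cut := cutoffIcc (x₀ - L) (x₀ + L)
  set B := truncatedHeatKernel x₀ L
  set B' := truncatedHeatKernelTimeDeriv x₀ L
  have hlt : ∀ t ∈ uIcc s τ, t < c := fun t ht ↦ (uIcc_of_le hsτ ▸ ht).2.trans_lt hc
  refine le_of_absolutelyContinuousOnInterval_of_deriv_nonneg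
    (f := fun t ↦ inner ℝ (u t) (cut (B (c - t)))) hsτ
    (absolutelyContinuousOnInterval_inner h.absolutelyContinuous
      (absolutelyContinuousOnInterval_cutoffLp_truncatedHeatKernel_const_sub _ _ x₀ L hlt)) ?_
  filter_upwards [h.ae_hasDerivAt, h.ae_inDomainA, h.ae_le, ae_restrict_mem measurableSet_Ioo]
    with t hut hdt hle ht
  have hpos : 0 < c - t := sub_pos.2 (ht.2.trans hc)
  have hkernel : HasDerivAt (fun t ↦ cut (B (c - t))) (-cut (B' (c - t))) t :=
    (hasDerivAt_cutoffLp_truncatedHeatKernel _ _ x₀ L hpos).comp_const_sub c t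
  rw [(hut.inner ℝ hkernel).deriv, inner_neg_right, neg_add_eq_sub, sub_nonneg]
  calc inner ℝ (u t) (cut (B' (c - t)))
      ≤ inner ℝ (uxx t) (cut (B (c - t))) :=
        hdt.inner_truncatedHeatKernelTimeDeriv_le (h.nonneg t (Ioo_subset_Icc_self ht)) hL hsub
          hpos (by linarith [ht.1])
    _ ≤ inner ℝ (u' t) (cut (B (c - t))) :=
        inner_cutoffLp_mono_left _ hle fun x hx ↦ truncatedHeatKernel_nonneg hpos.le hx

/-- Letting the singularity of the backward kernel approach time `τ` recovers the point value. -/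
theorem inner_truncatedHeatKernel_le_apply (h : IsNonnegSupersolution s τ u u' uxx) (hsτ : s < τ)
    {vt : ℝ → ℝ} (hvt : ContinuousOn vt (Ioo 0 1)) (hv : ∀ᵐ x ∂μ01, vt x = u τ x) {x₀ L : ℝ}
    (hL : 0 < L) (hsub : Icc (x₀ - L) (x₀ + L) ⊆ Ioo 0 1) (hsL : τ - s < L ^ 2 / 2) :
    inner ℝ (u s) (cutoffIcc (x₀ - L) (x₀ + L) (truncatedHeatKernel x₀ L (τ - s))) ≤ vt x₀ := by
  have hleft : Tendsto
      (fun c ↦ inner ℝ (u s) (cutoffIcc (x₀ - L) (x₀ + L) (truncatedHeatKernel x₀ L (c - s))))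
      (𝓝[>] τ)
      (𝓝 (inner ℝ (u s) (cutoffIcc (x₀ - L) (x₀ + L) (truncatedHeatKernel x₀ L (τ - s))))) :=
    (tendsto_const_nhds.inner ((hasDerivAt_cutoffLp_truncatedHeatKernel _ _ x₀ L
      (sub_pos.2 hsτ)).comp_sub_const τ s).continuousAt).mono_left nhdsWithin_le_nhds
  have hshift : Tendsto (fun c ↦ c - τ) (𝓝[>] τ) (𝓝[>] 0) := by
    refine tendsto_nhdsWithin_iff.2 ⟨?_, ?_⟩
    · simpa only [sub_self] using
        ((continuous_sub_right τ).tendsto τ).mono_left nhdsWithin_le_nhds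
    · filter_upwards [self_mem_nhdsWithin] with c hc using sub_pos.2 (mem_Ioi.1 hc)
  refine le_of_tendsto_of_tendsto hleft
    ((tendsto_intervalIntegral_mul_heatKernel (hvt.mono hsub) ⟨by linarith, by linarith⟩).comp
      hshift) ?_
  have hnear : ∀ᶠ c in 𝓝[>] τ, c < s + L ^ 2 / 2 :=
    eventually_nhdsWithin_of_eventually_nhds (eventually_lt_nhds (by linarith))
  filter_upwards [hnear, self_mem_nhdsWithin] with c hcL hc
  exact (h.inner_truncatedHeatKernel_le hsτ.le hL.le hsub hc (by linarith)).trans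
    (inner_truncatedHeatKernel_le_integral (h.nonneg τ (right_mem_Icc.2 hsτ.le)) hv
      (by linarith) hsub (sub_pos.2 hc))

theorem ae_eq_zero_of_apply_eq_zero (h : IsNonnegSupersolution s τ u u' uxx) (hsτ : s < τ)
    {vt : ℝ → ℝ} (hvt : ContinuousOn vt (Ioo 0 1)) (hv : ∀ᵐ x ∂μ01, vt x = u τ x) {x₀ L : ℝ}
    (hzero : vt x₀ = 0) (hL : 0 < L) (hsub : Icc (x₀ - L) (x₀ + L) ⊆ Ioo 0 1)
    (hsL : τ - s < L ^ 2 / 2) : ∀ᵐ x ∂μ01, x ∈ Ioo (x₀ - L) (x₀ + L) → u s x = 0 := by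
  have hle := (h.inner_truncatedHeatKernel_le_apply hsτ hvt hv hL hsub hsL).trans_eq hzero
  have hpos : 0 < τ - s := sub_pos.2 hsτ
  filter_upwards [ae_mul_eq_zero_of_inner_cutoffLp_nonpos _ (h.nonneg s (left_mem_Icc.2 hsτ.le))
    (fun x hx ↦ truncatedHeatKernel_nonneg hpos.le hx) hle] with x hx hxI
  exact (mul_eq_zero.1 (hx (Ioo_subset_Icc_self hxI))).resolve_right
    (truncatedHeatKernel_pos hpos hxI).ne'

theorem eqOn_zero_of_apply_eq_zero (h : IsNonnegSupersolution s τ u u' uxx) (hsτ : s < τ)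
    {vt : ℝ → ℝ} (hvt : ContinuousOn vt (Ioo 0 1)) (hv : ∀ᵐ x ∂μ01, vt x = u τ x) {x₀ L : ℝ}
    (hzero : vt x₀ = 0) (hL : 0 < L) (hsub : Icc (x₀ - L) (x₀ + L) ⊆ Ioo 0 1) :
    EqOn vt 0 (Ioo (x₀ - L) (x₀ + L)) := by
  have hcont : Tendsto u (𝓝[<] τ) (𝓝 (u τ)) := by
    refine ((h.absolutelyContinuous.continuousOn τ right_mem_uIcc).mono_left ?_)
    rw [uIcc_of_le hsτ.le, nhdsWithin_Icc_eq_nhdsLE hsτ]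
    exact nhdsWithin_mono τ Iio_subset_Iic_self
  have hnear : ∀ᶠ t in 𝓝[<] τ, t ∈ Ioo (max s (τ - L ^ 2 / 2)) τ :=
    Ioo_mem_nhdsLT (max_lt hsτ (by linarith [pow_pos hL 2]))
  have hae : ∀ᵐ x ∂μ01, x ∈ Ioo (x₀ - L) (x₀ + L) → u τ x ∈ ({0} : Set ℝ) := by
    refine ae_mem_of_tendsto_Lp isClosed_singleton hcont ?_
    filter_upwards [hnear] with t ht
    obtain ⟨hst, htL⟩ := max_lt_iff.1 ht.1
    exact (h.mono hst.le ht.2.le).ae_eq_zero_of_apply_eq_zero ht.2 hvt hv hzero hL hsub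
      (by linarith)
  have hsub' : Ioo (x₀ - L) (x₀ + L) ⊆ Ioo 0 1 := Ioo_subset_Icc_self.trans hsub
  refine Measure.eqOn_Ioo_of_ae_eq volume ?_ (hvt.mono hsub') continuousOn_const
  filter_upwards [ae_restrict_of_ae_restrict_of_subset hsub' (hae.and hv),
    ae_restrict_mem measurableSet_Ioo] with x hx hxI
  exact hx.2.trans (hx.1 hxI)

theorem eq_zero_of_apply_eq_zero (h : IsNonnegSupersolution s τ u u' uxx) (hsτ : s < τ)
    {vt : ℝ → ℝ} (hvt : ContinuousOn vt (Ioo 0 1)) (hv : ∀ᵐ x ∂μ01, vt x = u τ x) {x₀ : ℝ}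
    (hx₀ : x₀ ∈ Ioo 0 1) (hzero : vt x₀ = 0) : u τ = 0 := by
  have hopen : IsOpen {x | vt =ᶠ[𝓝 x] 0} := isOpen_setOfPred_eventually_nhds
  have hmem : ∀ x ∈ Ioo (0 : ℝ) 1, vt x = 0 → vt =ᶠ[𝓝 x] 0 := by
    intro x hx hvx
    obtain ⟨L, hL, hsub⟩ := Metric.nhds_basis_closedBall.mem_iff.1 (isOpen_Ioo.mem_nhds hx)
    rw [Real.closedBall_eq_Icc] at hsub
    filter_upwards [Ioo_mem_nhds (sub_lt_self x hL) (lt_add_of_pos_right x hL)] with y hy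
    exact h.eqOn_zero_of_apply_eq_zero hsτ hvt hv hvx hL hsub hy
  have hall : Ioo (0 : ℝ) 1 ⊆ {x | vt =ᶠ[𝓝 x] 0} := by
    refine isPreconnected_Ioo.subset_of_closure_inter_subset hopen ⟨x₀, hx₀, hmem x₀ hx₀ hzero⟩ ?_
    rintro x ⟨hxcl, hx⟩
    have hclosure := mem_closure_image (hvt.continuousAt (isOpen_Ioo.mem_nhds hx)) hxcl
    exact hmem x hx (closure_minimal (image_subset_iff.2 fun y hy ↦ hy.eq_of_nhds)
      isClosed_singleton hclosure)
  rw [Lp.eq_zero_iff_ae_eq_zero]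
  filter_upwards [hv, ae_restrict_mem measurableSet_Ioo] with x hvx hx
  exact hvx.symm.trans (hall hx).eq_of_nhds

end IsNonnegSupersolution

end Supersolution

theorem statement3_general {b ω : ℝ → ℝ} (hb : ∀ t, 0 ≤ b t) (hω : ∀ t, 0 ≤ ω t) {t₀ τ : ℝ}
    (ht₀ : t₀ < τ) {u : ℝ → Hsp} (hu : IsStrongSolution b ω t₀ u) (hnn : NonnegOn u t₀)
    {vt : ℝ → ℝ} (hvt : ContinuousOn vt (Ioo 0 1)) (hv : ∀ᵐ x ∂μ01, vt x = u τ x) {x₀ : ℝ}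
    (hx₀ : x₀ ∈ Ioo 0 1) (hzero : vt x₀ = 0) : u τ = 0 := by
  obtain ⟨r, u', uxx, hu⟩ := hu
  obtain ⟨s, hs, hsτ⟩ := exists_between ht₀
  exact (hu.isNonnegSupersolution hb hω hnn hs hsτ).eq_zero_of_apply_eq_zero hsτ hvt hv hx₀ hzero

/-- if `u_τ ∈ V` is non-negative, vanishes at some interior point
but is not identically zero, then there is no non-negative strong solution
backwards in time attaining the value `u_τ` at time `τ`. -/
theorem statement3
    (b ω : ℝ → ℝ) (b0 b1 ω0 ω1 τ : ℝ) (hC : Cond1 b ω b0 b1 ω0 ω1)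
    (uτ : Hsp) (vt : ℝ → ℝ) (hV : InVRep uτ vt)
    (hnn : ∀ᵐ x ∂μ01, 0 ≤ uτ x)
    (x₀ : ℝ) (hx₀ : x₀ ∈ Ioo (0:ℝ) 1) (hzero : vt x₀ = 0)
    (hne : uτ ≠ 0) :
    ¬ ∃ t₀, t₀ < τ ∧ ∃ u : ℝ → Hsp,
        IsStrongSolution b ω t₀ u ∧ NonnegOn u t₀ ∧ u τ = uτ := by
  rintro ⟨t₀, ht₀, u, hu, hnnu, rfl⟩
  exact hne (statement3_general (fun t ↦ hC.b0pos.le.trans (hC.blb t))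
    (fun t ↦ hC.ω0nonneg.trans (hC.ωlb t)) ht₀ hu hnnu (hV.1.mono Ioo_subset_Icc_self)
    hV.2.2.2.1 hx₀ hzero)

end
end

section
/- Assume condition (Cond1). If u_τ ≡ 0, then the unique non-negative strong solution to problem (Incl) backwards in time is the zero solution; that is, any non-negative strong solution u defined on [t₀,∞) with t₀ < τ and u(τ) ≡ 0 satisfies u(t) ≡ 0 for all t₀ ≤ t ≤ τ. -/
open MeasureTheory Set

noncomputable section

open Filter Topology

/-!
Pair the solution with the first Dirichlet eigenfunction `φ x = sin (π x)`. Where `u t` vanishes,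
the selection `r t` is not determined by `u t`; but there `∂ₜu ≥ 0`, because `u` is non-negative at
later times, and `∂²ₓu = 0` almost everywhere, because `u t` attains its minimum on that set. Hence
`r ≥ ω u` almost everywhere, also on the zero set, and `y t = ⟨φ, u t⟩` satisfies
`y' ≥ (ω - π²) y`. A non-negative solution of such an inequality that vanishes at time `τ` vanishes
before `τ`, and `φ > 0` turns `y t = 0` into `u t = 0`.
-/

lemma absolutelyContinuousOnInterval_congr {X : Type*} [PseudoMetricSpace X] {f g : ℝ → X}
    {a b : ℝ} (hf : AbsolutelyContinuousOnInterval f a b) (hfg : EqOn f g (uIcc a b)) :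
    AbsolutelyContinuousOnInterval g a b := by
  refine Tendsto.congr' ?_ hf
  refine mem_inf_of_right fun E hE ↦ Finset.sum_congr rfl fun i hi ↦ ?_
  rw [hfg (hE.1 i hi).1, hfg (hE.1 i hi).2]

lemma le_of_absolutelyContinuousOnInterval_of_ae_deriv_nonneg {f : ℝ → ℝ} {a b : ℝ} (hab : a ≤ b)
    (hf : AbsolutelyContinuousOnInterval f a b)
    (hderiv : ∀ᵐ t, t ∈ Ioo a b → 0 ≤ deriv f t) : f a ≤ f b := by
  rw [← sub_nonneg, ← hf.integral_deriv_eq_sub, intervalIntegral.integral_of_le hab,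
    integral_Ioc_eq_integral_Ioo]
  exact setIntegral_nonneg_of_ae_restrict ((ae_restrict_iff' measurableSet_Ioo).2 hderiv)

lemma exp_mul_le_exp_mul_of_ae_mul_le_deriv {f : ℝ → ℝ} {a b c : ℝ} (hab : a ≤ b)
    (hf : AbsolutelyContinuousOnInterval f a b)
    (hderiv : ∀ᵐ t, t ∈ Ioo a b → c * f t ≤ deriv f t) :
    Real.exp (-c * a) * f a ≤ Real.exp (-c * b) * f b := by
  have hexp (t : ℝ) :
      HasDerivAt (fun s ↦ Real.exp (-c * s)) (Real.exp (-c * t) * -c) t := by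
    simpa using ((hasDerivAt_id t).const_mul (-c)).exp
  have hexpAC : AbsolutelyContinuousOnInterval (fun s ↦ Real.exp (-c * s)) a b :=
    ContDiffOn.absolutelyContinuousOnInterval (by fun_prop)
  refine le_of_absolutelyContinuousOnInterval_of_ae_deriv_nonneg hab (hexpAC.fun_mul hf) ?_
  filter_upwards [hderiv, hf.ae_differentiableAt] with t ht hdiff htab
  have htab' : t ∈ uIcc a b := Icc_subset_uIcc (Ioo_subset_Icc_self htab)
  rw [((hexp t).fun_mul (hdiff htab').hasDerivAt).deriv]
  calc 0 ≤ Real.exp (-c * t) * (deriv f t - c * f t) :=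
        mul_nonneg (Real.exp_pos _).le (sub_nonneg.2 (ht htab))
    _ = _ := by ring

/-- A point of a level set where `f` has a non-zero derivative is isolated in that level set, and
a subset of `ℝ` has only countably many isolated points. -/
lemma ae_eq_zero_of_hasDerivAt_of_eq {E : Type*} [NormedAddCommGroup E] [NormedSpace ℝ E]
    (μ : Measure ℝ) [NullSingletonClass μ] (f : ℝ → E) (c : E) :
    ∀ᵐ x ∂μ, ∀ f', HasDerivAt f f' x → f x = c → f' = 0 := by
  have hcountable : {x ∈ f ⁻¹' {c} | 𝓝[f ⁻¹' {c} ∩ Ioi x] x = ⊥}.Countable :=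
    countable_setOfPred_isolated_right_within
  filter_upwards [measure_eq_zero_iff_ae_notMem.1 (hcountable.measure_zero μ)]
    with x hx f' hf' hfx
  by_contra hne
  refine hx ⟨hfx, ?_⟩
  have hisolated : ∀ᶠ z in 𝓝[>] x, f z ≠ c :=
    (hf'.eventually_ne hne).filter_mono (nhdsWithin_mono _ fun z hz ↦ ne_of_gt hz)
  rw [← empty_mem_iff_bot, inter_comm, nhdsWithin_inter']
  filter_upwards [mem_inf_of_left hisolated, mem_inf_of_right (mem_principal_self _)]
    with z hz hz' using hz hz'

lemma nonneg_of_continuousOn_of_ae_restrict {X : Type*} [TopologicalSpace X] [MeasurableSpace X]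
    {μ : Measure X} [μ.IsOpenPosMeasure] {U : Set X} {f : X → ℝ} (hU : IsOpen U)
    (hf : ContinuousOn f U) (hnonneg : 0 ≤ᵐ[μ.restrict U] f) : ∀ x ∈ U, 0 ≤ f x := by
  have habs : f =ᵐ[μ.restrict U] fun x ↦ |f x| :=
    hnonneg.mono fun x hx ↦ (abs_of_nonneg hx).symm
  intro x hx
  rw [Measure.eqOn_open_of_ae_eq habs hU hf hf.abs hx]
  exact abs_nonneg _

/-- Difference quotients converge almost everywhere along a subsequence, and at a zero of `u t`
those taken at later times are non-negative. -/
lemma ae_nonneg_of_hasDerivWithinAt_Ioi {α : Type*} [MeasurableSpace α] {μ : Measure α}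
    {p : ENNReal} [Fact (1 ≤ p)] {u : ℝ → Lp ℝ p μ} {u' : Lp ℝ p μ} {t : ℝ}
    (hu' : HasDerivWithinAt u u' (Ioi t) t) (hu : ∀ᶠ s in 𝓝[>] t, 0 ≤ᵐ[μ] u s) :
    ∀ᵐ x ∂μ, u t x = 0 → 0 ≤ u' x := by
  have hslope : Tendsto (slope u t) (𝓝[>] t) (𝓝 u') :=
    (hasDerivWithinAt_iff_tendsto_slope' self_notMem_Ioi).1 hu'
  obtain ⟨s, hs, hlim⟩ := (tendstoInMeasure_of_tendsto_Lp hslope).exists_seq_tendsto_ae'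
  have hquot : ∀ᵐ x ∂μ, ∀ n, t < s n → 0 ≤ᵐ[μ] u (s n) → u t x = 0 → 0 ≤ slope u t (s n) x := by
    simp only [ae_all_iff, eventually_imp_distrib_left]
    intro n htn hun
    rw [slope_def_module]
    filter_upwards [Lp.coeFn_smul (s n - t)⁻¹ (u (s n) - u t), Lp.coeFn_sub (u (s n)) (u t), hun]
      with x hsmul hsub hnonneg hzero
    rw [hsmul, Pi.smul_apply, hsub, Pi.sub_apply, hzero, sub_zero, smul_eq_mul]
    exact mul_nonneg (inv_nonneg.2 (sub_nonneg.2 htn.le)) hnonneg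
  filter_upwards [hquot, hlim] with x hquot hlim hzero
  refine ge_of_tendsto hlim ?_
  filter_upwards [hs.eventually (hu.and self_mem_nhdsWithin)] with n hn
  exact hquot n hn.2 hn.1 hzero

instance isProbabilityMeasure_μ01 : IsProbabilityMeasure μ01 := ⟨by simp [μ01]⟩

instance nullSingletonClass_μ01 : NullSingletonClass μ01 := by unfold μ01; infer_instance

lemma ae_mem_Ioo_μ01 : ∀ᵐ x ∂μ01, x ∈ Ioo (0 : ℝ) 1 :=
  ae_restrict_mem measurableSet_Ioo

lemma integral_μ01_eq_intervalIntegral (f : ℝ → ℝ) : ∫ x, f x ∂μ01 = ∫ x in (0 : ℝ)..1, f x := by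
  rw [intervalIntegral.integral_of_le zero_le_one, integral_Ioc_eq_integral_Ioo, μ01]

lemma intervalIntegrable_of_integrable_μ01 {f : ℝ → ℝ} (hf : Integrable f μ01) :
    IntervalIntegrable f volume 0 1 :=
  (intervalIntegrable_iff_integrableOn_Ioo_of_le zero_le_one).2 hf

/-- `f` is the `C¹` representative of `v ∈ H²(0,1) ∩ H¹₀(0,1)`, `f'` is its derivative, extended
to an absolutely continuous function on `[0,1]`, and `w` is the second derivative. -/
structure IsC1Representative (f f' : ℝ → ℝ) (v w : Hsp) : Prop where
  continuousOn : ContinuousOn f (Icc 0 1)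
  map_zero : f 0 = 0
  map_one : f 1 = 0
  ae_eq : f =ᵐ[μ01] v
  hasDerivAt : ∀ x ∈ Ioo (0 : ℝ) 1, HasDerivAt f (f' x) x
  absolutelyContinuous : AbsolutelyContinuousOnInterval f' 0 1
  ae_hasDerivAt_deriv : ∀ᵐ x ∂μ01, HasDerivAt f' (w x) x

lemma InDomainA.exists_isC1Representative {v w : Hsp} (h : InDomainA v w) :
    ∃ f f', IsC1Representative f f' v w := by
  obtain ⟨f, hf, hf0, hf1, hfv, g, hg, hgw⟩ := h
  have hhalf : (1 / 2 : ℝ) ∈ Ioo (0 : ℝ) 1 := by norm_num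
  have hhalf' : (1 / 2 : ℝ) ∈ uIcc (0 : ℝ) 1 := Icc_subset_uIcc (Ioo_subset_Icc_self hhalf)
  have hw : IntervalIntegrable w volume 0 1 :=
    intervalIntegrable_of_integrable_μ01 ((Lp.memLp w).integrable one_le_two)
  refine ⟨f, fun x ↦ g (1 / 2) + ∫ z in (1 / 2)..x, w z, hf, hf0, hf1, hfv, fun x hx ↦ ?_, ?_, ?_⟩
  · rw [← hgw x hx _ hhalf, add_sub_cancel]
    exact hg x hx
  · have hconst : AbsolutelyContinuousOnInterval (fun _ ↦ g (1 / 2)) 0 1 :=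
      contDiffOn_const.absolutelyContinuousOnInterval
    exact hconst.fun_add (hw.absolutelyContinuousOnInterval_intervalIntegral hhalf')
  · filter_upwards [ae_restrict_of_ae hw.ae_hasDerivAt_integral, ae_mem_Ioo_μ01] with x hderiv hx
    exact (hderiv (Icc_subset_uIcc (Ioo_subset_Icc_self hx)) _ hhalf').const_add _

lemma InDomainA.ae_eq_zero_of_eq_zero {v w : Hsp} (h : InDomainA v w) (hv : 0 ≤ᵐ[μ01] v) :
    ∀ᵐ x ∂μ01, v x = 0 → w x = 0 := by
  obtain ⟨f, f', hf⟩ := h.exists_isC1Representative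
  have hf_nonneg : ∀ x ∈ Ioo (0 : ℝ) 1, 0 ≤ f x :=
    nonneg_of_continuousOn_of_ae_restrict isOpen_Ioo (hf.continuousOn.mono Ioo_subset_Icc_self)
      (hv.trans_eq hf.ae_eq.symm)
  filter_upwards [ae_eq_zero_of_hasDerivAt_of_eq μ01 f' 0, hf.ae_hasDerivAt_deriv, ae_mem_Ioo_μ01,
    hf.ae_eq] with x hlevel hderiv hx hfv hvx
  have hmin : IsLocalMin f x := by
    filter_upwards [Ioo_mem_nhds hx.1 hx.2] with z hz
    rw [hfv, hvx]
    exact hf_nonneg z hz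
  exact hlevel _ hderiv (hmin.hasDerivAt_eq_zero (hf.hasDerivAt x hx))

lemma InDomainA.integral_mul_second_deriv_eq {v w : Hsp} (h : InDomainA v w) {φ φ' φ'' : ℝ → ℝ}
    (hφ : ∀ x, HasDerivAt φ (φ' x) x) (hφ' : ∀ x, HasDerivAt φ' (φ'' x) x)
    (hφ'' : Continuous φ'') (hφ0 : φ 0 = 0) (hφ1 : φ 1 = 0) :
    ∫ x, φ x * w x ∂μ01 = ∫ x, φ'' x * v x ∂μ01 := by
  obtain ⟨f, f', hf⟩ := h.exists_isC1Representative
  have hφ'_cont : Continuous φ' := continuous_iff_continuousAt.2 fun x ↦ (hφ' x).continuousAt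
  have hφ_deriv : deriv φ = φ' := funext fun x ↦ (hφ x).deriv
  have hφ_AC : AbsolutelyContinuousOnInterval φ 0 1 :=
    (contDiff_one_iff_deriv.2 ⟨fun x ↦ (hφ x).differentiableAt, hφ_deriv ▸ hφ'_cont⟩).contDiffOn
      |>.absolutelyContinuousOnInterval
  calc ∫ x, φ x * w x ∂μ01
    _ = ∫ x, φ x * deriv f' x ∂μ01 :=
        integral_congr_ae (hf.ae_hasDerivAt_deriv.mono fun x hx ↦ by simp only [hx.deriv])
    _ = -∫ x in (0 : ℝ)..1, φ' x * f' x := by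
        rw [integral_μ01_eq_intervalIntegral,
          hφ_AC.integral_mul_deriv_eq_deriv_mul hf.absolutelyContinuous, hφ_deriv, hφ0, hφ1]
        ring
    _ = ∫ x in (0 : ℝ)..1, φ'' x * f x := by
        rw [intervalIntegral.integral_mul_deriv_eq_deriv_mul_of_hasDerivAt hφ'_cont.continuousOn
          (by simpa using hf.continuousOn) (fun x _ ↦ hφ' x) (by simpa using hf.hasDerivAt)
          (hφ''.intervalIntegrable _ _) hf.absolutelyContinuous.continuousOn.intervalIntegrable,
          hf.map_zero, hf.map_one]
        ring
    _ = ∫ x, φ'' x * v x ∂μ01 := by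
        rw [← integral_μ01_eq_intervalIntegral]
        exact integral_congr_ae (hf.ae_eq.mono fun x hx ↦ by simp only [hx])

lemma memLp_sin_pi_mul : MemLp (fun x ↦ Real.sin (Real.pi * x)) 2 μ01 :=
  .of_bound (by fun_prop) 1 (.of_forall fun x ↦ Real.abs_sin_le_one _)

lemma ae_sin_pi_mul_pos : ∀ᵐ x ∂μ01, 0 < Real.sin (Real.pi * x) := by
  filter_upwards [ae_mem_Ioo_μ01] with x hx
  exact Real.sin_pos_of_pos_of_lt_pi (mul_pos Real.pi_pos hx.1)
    (mul_lt_of_lt_one_right Real.pi_pos hx.2)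

/-- The pairing of `v ∈ L²(0,1)` with the first Dirichlet eigenfunction `sin (π x)`, which is
left unnormalized. -/
def sinCoeff : Hsp →L[ℝ] ℝ := innerSL ℝ (memLp_sin_pi_mul.toLp _)

lemma sinCoeff_apply (v : Hsp) : sinCoeff v = ∫ x, Real.sin (Real.pi * x) * v x ∂μ01 := by
  rw [sinCoeff, innerSL_apply_apply, L2.inner_def]
  refine integral_congr_ae (memLp_sin_pi_mul.coeFn_toLp.mono fun x hx ↦ ?_)
  simp only [hx, RCLike.inner_apply, conj_trivial]
  exact mul_comm _ _

lemma integrable_sin_pi_mul_mul (v : Hsp) :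
    Integrable (fun x ↦ Real.sin (Real.pi * x) * v x) μ01 :=
  memLp_sin_pi_mul.integrable_mul (Lp.memLp v)

lemma sinCoeff_monotone : Monotone sinCoeff := by
  intro v w hvw
  rw [sinCoeff_apply, sinCoeff_apply]
  refine integral_mono_ae (integrable_sin_pi_mul_mul v) (integrable_sin_pi_mul_mul w) ?_
  filter_upwards [(Lp.coeFn_le v w).2 hvw, ae_sin_pi_mul_pos] with x hle hsin
  exact mul_le_mul_of_nonneg_left hle hsin.le

lemma eq_zero_of_sinCoeff_nonpos {v : Hsp} (hv : 0 ≤ v) (h : sinCoeff v ≤ 0) : v = 0 := by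
  have hv' : 0 ≤ᵐ[μ01] v := (Lp.coeFn_nonneg v).2 hv
  have hnonneg : 0 ≤ᵐ[μ01] fun x ↦ Real.sin (Real.pi * x) * v x := by
    filter_upwards [hv', ae_sin_pi_mul_pos] with x hvx hsin using mul_nonneg hsin.le hvx
  have hzero : ∫ x, Real.sin (Real.pi * x) * v x ∂μ01 = 0 :=
    (sinCoeff_apply v ▸ h).antisymm (integral_nonneg_of_ae hnonneg)
  rw [integral_eq_zero_iff_of_nonneg_ae hnonneg (integrable_sin_pi_mul_mul v)] at hzero
  rw [Lp.eq_zero_iff_ae_eq_zero]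
  filter_upwards [hzero, ae_sin_pi_mul_pos] with x hx hsin
  exact (mul_eq_zero.1 hx).resolve_left hsin.ne'

lemma InDomainA.sinCoeff_eq {v w : Hsp} (h : InDomainA v w) :
    sinCoeff w = -Real.pi ^ 2 * sinCoeff v := by
  have hlin (x : ℝ) : HasDerivAt (fun x ↦ Real.pi * x) Real.pi x := by
    simpa using (hasDerivAt_id x).const_mul Real.pi
  rw [sinCoeff_apply, sinCoeff_apply, ← integral_const_mul,
    h.integral_mul_second_deriv_eq (fun x ↦ (hlin x).sin) (fun x ↦ (hlin x).cos.mul_const Real.pi)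
      (by fun_prop) (by simp) (by simp)]
  congr 1 with x
  ring

lemma heaviside_of_pos {s : ℝ} (hs : 0 < s) : heaviside s = {1} := by
  rw [heaviside, if_neg hs.not_gt, if_neg hs.ne']

/-- On `{v = 0}` the inclusion alone would allow `r x = -β`; the bound comes from
`r = v' - w` instead. -/
lemma ae_mul_le_of_mem_heaviside {v v' r w : Hsp} {β o κ : ℝ} (hβ : 0 ≤ β) (ho : κ ≤ o)
    (hv : 0 ≤ᵐ[μ01] v) (hv' : ∀ᵐ x ∂μ01, v x = 0 → 0 ≤ v' x) (hw : InDomainA v w)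
    (heq : v' = r + w)
    (hr : ∀ᵐ x ∂μ01, ∃ h ∈ heaviside (v x), r x = β * h + o * v x) :
    ∀ᵐ x ∂μ01, κ * v x ≤ r x := by
  subst heq
  filter_upwards [hv, hv', hw.ae_eq_zero_of_eq_zero hv, hr, Lp.coeFn_add r w]
    with x hvx hv'x hwx ⟨h, hh, hrx⟩ hadd
  rcases hvx.eq_or_lt with hzero | hpos
  · replace hzero : v x = 0 := hzero.symm
    have hrwx : 0 ≤ (r + w) x := hv'x hzero
    rw [hadd, Pi.add_apply, hwx hzero, add_zero] at hrwx
    rwa [hzero, mul_zero]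
  · obtain rfl : h = 1 := by simpa [heaviside_of_pos hpos] using hh
    linarith [mul_le_mul_of_nonneg_right ho hpos.le]

namespace IsStrongSolutionWith

variable {b ω : ℝ → ℝ} {t₀ T₁ T₂ : ℝ} {u r u' uxx : ℝ → Hsp}

lemma ae_hasDerivAt (hu : IsStrongSolutionWith b ω t₀ u r u' uxx) (h₁ : t₀ < T₁) (h₁₂ : T₁ < T₂) :
    ∀ᵐ t, t ∈ Ioo T₁ T₂ → HasDerivAt u (u' t) t := by
  obtain ⟨hint, hfund⟩ := hu.fund T₁ T₂ h₁ h₁₂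
  filter_upwards [hint.ae_hasDerivAt_integral] with t hderiv ht
  have ht' : t ∈ uIcc T₁ T₂ := Icc_subset_uIcc (Ioo_subset_Icc_self ht)
  refine ((hderiv ht' T₁ left_mem_uIcc).const_add (u T₁)).congr_of_eventuallyEq ?_
  filter_upwards [Ioo_mem_nhds ht.1 ht.2] with s hs using hfund s (Ioo_subset_Icc_self hs)

lemma absolutelyContinuousOnInterval_comp (hu : IsStrongSolutionWith b ω t₀ u r u' uxx)
    (h₁ : t₀ < T₁) (h₁₂ : T₁ < T₂) (ℓ : Hsp →L[ℝ] ℝ) :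
    AbsolutelyContinuousOnInterval (fun t ↦ ℓ (u t)) T₁ T₂ := by
  obtain ⟨hint, hfund⟩ := hu.fund T₁ T₂ h₁ h₁₂
  have hℓint : IntervalIntegrable (fun t ↦ ℓ (u' t)) volume T₁ T₂ :=
    ⟨ℓ.integrable_comp hint.1, ℓ.integrable_comp hint.2⟩
  have hconst : AbsolutelyContinuousOnInterval (fun _ ↦ ℓ (u T₁)) T₁ T₂ :=
    contDiffOn_const.absolutelyContinuousOnInterval
  refine absolutelyContinuousOnInterval_congr (hconst.fun_add
    (hℓint.absolutelyContinuousOnInterval_intervalIntegral left_mem_uIcc)) fun t ht ↦ ?_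
  have hint_t : IntervalIntegrable u' volume T₁ t :=
    hint.mono_set (uIcc_subset_uIcc_left ht)
  rw [ℓ.intervalIntegral_comp_comm hint_t, ← map_add,
    ← hfund t (by rwa [uIcc_of_le h₁₂.le] at ht)]

lemma ae_mul_sinCoeff_le_deriv (hu : IsStrongSolutionWith b ω t₀ u r u' uxx)
    (hnonneg : NonnegOn u t₀) {κ : ℝ} (h₁ : t₀ < T₁) (h₁₂ : T₁ < T₂)
    (hb : ∀ t ∈ Ioo T₁ T₂, 0 ≤ b t) (hω : ∀ t ∈ Ioo T₁ T₂, κ ≤ ω t) :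
    ∀ᵐ t, t ∈ Ioo T₁ T₂ →
      (κ - Real.pi ^ 2) * sinCoeff (u t) ≤ deriv (fun s ↦ sinCoeff (u s)) t := by
  filter_upwards [hu.ae_hasDerivAt h₁ h₁₂, ae_imp_of_ae_restrict hu.sel,
    ae_imp_of_ae_restrict hu.dom, ae_imp_of_ae_restrict hu.eq] with t hderiv hsel hdom heq ht
  have ht₀ : t₀ < t := h₁.trans ht.1
  have hut' : ∀ᵐ x ∂μ01, u t x = 0 → 0 ≤ u' t x :=
    ae_nonneg_of_hasDerivWithinAt_Ioi (hderiv ht).hasDerivWithinAt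
      (eventually_mem_nhdsWithin.mono fun s hs ↦ hnonneg s (ht₀.trans hs).le)
  have hr : κ • u t ≤ r t := by
    rw [← Lp.coeFn_le]
    filter_upwards [Lp.coeFn_smul κ (u t), ae_mul_le_of_mem_heaviside (hb t ht) (hω t ht)
      (hnonneg t ht₀.le) hut' (hdom ht₀) (heq ht₀) (hsel ht₀)] with x hsmul hle
    simpa [hsmul] using hle
  calc (κ - Real.pi ^ 2) * sinCoeff (u t)
    _ = sinCoeff (κ • u t) + -Real.pi ^ 2 * sinCoeff (u t) := by
        rw [map_smul, smul_eq_mul]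
        ring
    _ ≤ sinCoeff (r t) + sinCoeff (uxx t) := by
        rw [(hdom ht₀).sinCoeff_eq]
        gcongr
        exact sinCoeff_monotone hr
    _ = deriv (fun s ↦ sinCoeff (u s)) t := by
        rw [← map_add, ← heq ht₀]
        exact (sinCoeff.hasFDerivAt.comp_hasDerivAt t (hderiv ht)).deriv.symm

end IsStrongSolutionWith

theorem statement4_general
    {b ω : ℝ → ℝ} {κ t₀ τ : ℝ} (hb : ∀ t ∈ Ioo t₀ τ, 0 ≤ b t) (hω : ∀ t ∈ Ioo t₀ τ, κ ≤ ω t)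
    (ht₀ : t₀ < τ) {u : ℝ → Hsp} (hsol : IsStrongSolution b ω t₀ u) (hnneg : NonnegOn u t₀)
    (hτ : u τ = 0) :
    EqOn u 0 (Icc t₀ τ) := by
  obtain ⟨r, u', uxx, hu⟩ := hsol
  suffices hIoo : EqOn u 0 (Ioo t₀ τ) from
    hIoo.of_subset_closure (hu.cont.mono Icc_subset_Ici_self) continuousOn_const
      Ioo_subset_Icc_self (closure_Ioo ht₀.ne).ge
  intro a ha
  have hsub : Ioo a τ ⊆ Ioo t₀ τ := Ioo_subset_Ioo_left ha.1.le
  have hgronwall := exp_mul_le_exp_mul_of_ae_mul_le_deriv ha.2.le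
    (hu.absolutelyContinuousOnInterval_comp ha.1 ha.2 sinCoeff)
    (hu.ae_mul_sinCoeff_le_deriv hnneg ha.1 ha.2 (fun t ht ↦ hb t (hsub ht))
      fun t ht ↦ hω t (hsub ht))
  rw [hτ, map_zero, mul_zero] at hgronwall
  exact eq_zero_of_sinCoeff_nonpos ((Lp.coeFn_nonneg _).1 (hnneg a ha.1.le))
    (nonpos_of_mul_nonpos_right hgronwall (Real.exp_pos _))

/-- if `u_τ ≡ 0`, then the unique non-negative strong solution
backwards in time is the zero solution: any non-negative strong solution on
`[t₀,∞)` with `t₀ < τ` and `u(τ) ≡ 0` vanishes identically on `[t₀,τ]`. -/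
theorem statement4
    (b ω : ℝ → ℝ) (b0 b1 ω0 ω1 τ : ℝ) (hC : Cond1 b ω b0 b1 ω0 ω1)
    (t₀ : ℝ) (ht₀ : t₀ < τ) (u : ℝ → Hsp)
    (hsol : IsStrongSolution b ω t₀ u) (hnneg : NonnegOn u t₀)
    (hτ : u τ = 0) :
    ∀ t, t₀ ≤ t → t ≤ τ → u t = 0 := by
  intro t ht₀t htτ
  exact statement4_general (fun s _ ↦ hC.b0pos.le.trans (hC.blb s))
    (fun s _ ↦ hC.ω0nonneg.trans (hC.ωlb s)) ht₀ hsol hnneg hτ ⟨ht₀t, htτ⟩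

end
end
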